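/- Let G be a cycle of length n and I = I_c(G) its complementary edge ideal, and set α = x_1⋯x_n. (1) If n = 2m+1, then HS_{2m}(I^s) = α^m · I^{s−m} for all s ≥ m; in particular the homological shift algebra HS_{2m}(ℛ(I)) is generated in degree m over the Rees algebra ℛ(I). (2) If n = 2m, then HS_{2m−2}(I^s) = α^{m−1} · I^{s−m+1} for all s ≥ m−1; in particular HS_{2m−2}(ℛ(I)) is generated in degree m−1 over ℛ(I). -/

import Mathlib

/-!
Below, `I` stands for the complementary edge ideal of the cycle, with edges `{v, v + 1}`. A monomial `x^b`
lies in `I^s` if and only if some multigraph with `s` edges on the cycle has degree at least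
`s - b_v` at every vertex `v`; in the notation below, `Cov s (s - b)`. Hence membership of
`x^(a - F)` in `I^s`, i.e. the faces of the upper Koszul complex in multidegree `a`, is governed by
covers of the demand vector `d = s + 1 - a` (`dem s a`), lowered by one unit outside `F`
(`face_iff`). The claim is that homology in the top degree occurs exactly for the multidegrees
that make `d - 1` a degree vector of the right size, up to multiples (`HSIdeal_eq`).

*Homology.* In degree `n - 1` the homology is nonzero iff the complex is the boundary of the full
simplex (`nontrivial_Hmod_top`). In degree `n - 2`, Alexander duality turns it into disconnectedness
of the graph of the complements of non-faces (`nontrivial_Hmod_subtop`).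

*Covers.* `cov_of_indep` is a min-max formula: `d` is covered by `s` edges unless an independent set
has weight above `s` or the total weight exceeds `2 s`.

*Odd cycle.* If `d` is not covered but each `d - e_j` is, then the total weight is `2 s + 1`, so that
all these covers are exact. Since degrees determine the edge weights on an odd cycle, the covers of
`d - e_j` and `d - e_(j+1)` agree on the edge `{j, j + 1}`, and these common values form a cover of
`d - 1` (`odd_core`). Conversely `d = 1 + deg w` works because the complement of any vertex has a
perfect matching (`odd_conv`).

*Even cycle.* Disconnectedness forces the violating independent sets to be the two colour classes,
both of weight `s + 1`, so that `d - e_u - e_v` is exactly covered for all `u, v` of different colour.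
Exact realizations of `d` differ by an alternating vector; choosing the one that contains the
critical edge of a perfect matching and removing this matching covers `d - 1` (`even_core`). The
converse again uses perfect matchings, now of the complement of two vertices (`even_conv`).
-/


open MvPolynomial

namespace Paper

noncomputable section

variable (K : Type) [Field K] (n : ℕ)

/-- The polynomial ring `S = K[x_1, …, x_n]`. -/
abbrev S := MvPolynomial (Fin n) K

variable {n}

/-- The squarefree exponent vector of a subset `F ⊆ [n]`. -/
def expF (F : Finset (Fin n)) : Fin n →₀ ℕ := ∑ j ∈ F, Finsupp.single j 1

variable {K}

/-- Basis of the multidegree-`a` component of the `i`-th term of the Koszul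
complex of `x_1, …, x_n` tensored with the ideal `I`:  subsets `F` of
cardinality `i` such that `x^(a - ε_F) ∈ I`. -/
abbrev KB (I : Ideal (S K n)) (a : Fin n →₀ ℕ) (i : ℕ) : Type :=
  {F : Finset (Fin n) // F.card = i ∧ expF F ≤ a ∧
    (monomial (a - expF F) (1 : K) : S K n) ∈ I}

/-- The Koszul differential (in multidegree `a`) from homological degree
`i+1` to `i`. -/
def kd (I : Ideal (S K n)) (a : Fin n →₀ ℕ) (i : ℕ) :
    (KB I a (i + 1) →₀ K) →ₗ[K] (KB I a i →₀ K) :=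
  Finsupp.lsum K fun F =>
    LinearMap.toSpanSingleton K _
      (∑ j ∈ F.1.attach,
        ((-1 : K) ^ ((F.1.filter (fun x => x < j.1)).card)) •
          Finsupp.single
            (⟨F.1.erase j.1, by
              obtain ⟨hcard, hle, hmem⟩ := F.2
              have hj : j.1 ∈ F.1 := j.2
              have herase : expF (F.1.erase j.1) + Finsupp.single j.1 1 = expF F.1 := by
                simpa [expF] using Finset.sum_erase_add F.1 (fun k => Finsupp.single k (1:ℕ)) hj
              refine ⟨by simp [Finset.card_erase_of_mem hj, hcard], ?_, ?_⟩
              · refine le_trans ?_ hle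
                rw [← herase]; exact le_add_of_nonneg_right bot_le
              · have h1 : Finsupp.single j.1 1 ≤ expF F.1 := by
                  rw [← herase]; exact le_add_of_nonneg_left bot_le
                have key : a - expF (F.1.erase j.1) =
                    (a - expF F.1) + Finsupp.single j.1 1 := by
                  have : expF (F.1.erase j.1) = expF F.1 - Finsupp.single j.1 1 := by
                    rw [← herase]; simp
                  rw [this, tsub_tsub_assoc hle h1]
                rw [key]
                have : (monomial ((a - expF F.1) + Finsupp.single j.1 1) (1:K) : S K n)
                    = (monomial (a - expF F.1) (1:K)) * (monomial (Finsupp.single j.1 1) (1:K)) := by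
                  rw [monomial_mul, mul_one]
                rw [this]
                exact Ideal.mul_mem_right _ _ hmem⟩ : KB I a i) (1 : K))

/-- The outgoing Koszul differential from homological degree `i`
(the zero map when `i = 0`). -/
def kdOut (I : Ideal (S K n)) (a : Fin n →₀ ℕ) :
    (i : ℕ) → (KB I a i →₀ K) →ₗ[K] (KB I a (i - 1) →₀ K)
  | 0 => 0
  | (i + 1) => kd I a i

/-- The multidegree-`a` component of `Tor_i^S(K, I)`, computed as the `i`-th
homology of the multidegree-`a` strand of the Koszul complex tensored
with `I`. -/
abbrev Hmod (I : Ideal (S K n)) (a : Fin n →₀ ℕ) (i : ℕ) :=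
  ↥(Submodule.map (Submodule.mkQ (LinearMap.range (kd I a i)))
      (LinearMap.ker (kdOut I a i)))

/-- The `i`-th homological shift ideal `HS_i(I)`, generated by the monomials
`x^a` with `Tor_i^S(K, I)_a ≠ 0`. -/
def HSIdeal (i : ℕ) (I : Ideal (S K n)) : Ideal (S K n) :=
  Ideal.span {p | ∃ a : Fin n →₀ ℕ, Nontrivial (Hmod I a i) ∧ p = monomial a 1}

/-- `I` is a monomial ideal. -/
def IsMonomialIdeal (I : Ideal (S K n)) : Prop :=
  ∃ A : Set (Fin n →₀ ℕ), I = Ideal.span ((fun a => (monomial a 1 : S K n)) '' A)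

/-- `I` has a `d`-linear resolution: `Tor_i^S(K,I)_j = 0` whenever `j ≠ i + d`. -/
def LinearRes (d : ℕ) (I : Ideal (S K n)) : Prop :=
  ∀ (i : ℕ) (a : Fin n →₀ ℕ), (a.sum fun _ e => e) ≠ i + d → Subsingleton (Hmod I a i)

/-- The projective dimension of (a finitely generated multigraded module such
as) `I` over `S`: the largest `i` with `Tor_i^S(K, I) ≠ 0`. -/
def pdim (I : Ideal (S K n)) : ℕ :=
  sSup {i | ∃ a, Nontrivial (Hmod I a i)}

variable (K n)

/-- The graded maximal ideal `𝔪 = (x_1, …, x_n)`. -/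
def maxIdl : Ideal (S K n) := Ideal.span (Set.range X)

/-- The `i`-th squarefree power `𝔪^{[i]} = (x_F : F ⊆ [n], |F| = i)`. -/
def sqPow (i : ℕ) : Ideal (S K n) :=
  Ideal.span {p | ∃ F : Finset (Fin n), F.card = i ∧ p = monomial (expF F) 1}

/-- The exponent vector of `α = x_1⋯x_n`. -/
def aexp : Fin n →₀ ℕ := expF (Finset.univ : Finset (Fin n))

/-- The edge ideal `I(G)` of a graph `G` on `[n]`. -/
def edgeIdeal (G : SimpleGraph (Fin n)) : Ideal (S K n) :=
  Ideal.span {p | ∃ i j, G.Adj i j ∧ p = X i * X j}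

/-- The complementary edge ideal `I_c(G)` of a graph `G` on `[n]`. -/
def compIdeal (G : SimpleGraph (Fin n)) : Ideal (S K n) :=
  Ideal.span {p | ∃ i j, G.Adj i j ∧
    p = monomial (aexp n - Finsupp.single i 1 - Finsupp.single j 1) 1}


variable {K} {n}

end

/-! ### Edge covers of a cycle with demands -/

/-- The number of edges (with multiplicity) at the vertex `v`, for the multigraph on the cycle in
which the edge `{v, v + 1}` has multiplicity `w v`. -/
def deg {p : ℕ} {R : Type*} [Add R] (w : Fin (p + 3) → R) (v : Fin (p + 3)) : R := w v + w (v - 1)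

/-- The demand vector `d` is met by some multigraph on the cycle with exactly `s` edges. -/
def Cov {p : ℕ} (s : ℕ) (d : Fin (p + 3) → ℤ) : Prop :=
  ∃ w : Fin (p + 3) → ℕ, ∑ v, w v = s ∧ ∀ v, d v ≤ (deg w v : ℕ)

/-- `A` contains no two cyclically consecutive vertices. -/
def Indep {p : ℕ} (A : Finset (Fin (p + 3))) : Prop := ∀ v ∈ A, v + 1 ∉ A

theorem sum_deg {p : ℕ} {R : Type*} [CommSemiring R] (w : Fin (p + 3) → R) :
    ∑ v, deg w v = 2 * ∑ v, w v := by
  simp only [deg, Finset.sum_add_distrib]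
  rw [two_mul]
  exact congrArg _ ((Equiv.subRight (1 : Fin (p + 3))).sum_comp w)

theorem deg_le_sum {p : ℕ} (w : Fin (p + 3) → ℕ) (v : Fin (p + 3)) : deg w v ≤ ∑ u, w u := by
  have hne : v ≠ v - 1 := by
    intro h
    have : (1 : Fin (p + 3)) = 0 := by
      have := sub_eq_self.mp h.symm
      exact this
    simp at this
  rw [deg, ← Finset.sum_pair hne]
  exact Finset.sum_le_sum_of_subset (Finset.subset_univ _)

/-- Weak duality: an edge of the cycle meets an independent set at most once. -/
theorem Cov.sum_le {p s : ℕ} {d : Fin (p + 3) → ℤ} (h : Cov s d) {A : Finset (Fin (p + 3))}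
    (hA : Indep A) : ∑ v ∈ A, d v ≤ s := by
  obtain ⟨w, rfl, hw⟩ := h
  have h1 : ∑ v ∈ A, d v ≤ ∑ v ∈ A, ((deg w v : ℕ) : ℤ) := Finset.sum_le_sum fun v _ => hw v
  refine h1.trans ?_
  rw [← Nat.cast_sum]
  norm_cast
  simp only [deg, Finset.sum_add_distrib]
  have h2 : ∑ v ∈ A, w (v - 1) = ∑ v ∈ A.image (fun v => v - 1), w v := by
    rw [Finset.sum_image]
    intro a _ b _ hab
    exact sub_left_injective hab
  rw [h2, ← Finset.sum_union]
  · exact Finset.sum_le_sum_of_subset (Finset.subset_univ _)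
  · rw [Finset.disjoint_left]
    intro v hv hv'
    obtain ⟨u, hu, rfl⟩ := Finset.mem_image.mp hv'
    exact hA _ hv (by simpa using hu)

theorem Cov.sum_univ_le {p s : ℕ} {d : Fin (p + 3) → ℤ} (h : Cov s d) : ∑ v, d v ≤ 2 * s := by
  obtain ⟨w, rfl, hw⟩ := h
  have h1 : ∑ v, d v ≤ ∑ v, ((deg w v : ℕ) : ℤ) := Finset.sum_le_sum fun v _ => hw v
  refine h1.trans ?_
  rw [← Nat.cast_sum, sum_deg]
  push_cast
  rfl

theorem Cov.mono {p s : ℕ} {d d' : Fin (p + 3) → ℤ} (h : Cov s d) (hd : ∀ v, d' v ≤ d v) :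
    Cov s d' := by
  obtain ⟨w, hs, hw⟩ := h
  exact ⟨w, hs, fun v => (hd v).trans (hw v)⟩

/-- The maximum weight of a set of non-consecutive naturals below `k`, for the weights `d`. -/
def pathMax (d : ℕ → ℤ) : ℕ → ℤ
  | 0 => 0
  | 1 => max 0 (d 0)
  | k + 2 => max (pathMax d (k + 1)) (pathMax d k + d (k + 1))

theorem pathMax_le_succ (d : ℕ → ℤ) (k : ℕ) : pathMax d k ≤ pathMax d (k + 1) := by
  cases k with
  | zero => simp [pathMax]
  | succ k => simp [pathMax]

theorem pathMax_attained (d : ℕ → ℤ) (k : ℕ) : ∃ A : Finset ℕ, (∀ i ∈ A, i < k) ∧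
    (∀ i ∈ A, i + 1 ∉ A) ∧ ∑ i ∈ A, d i = pathMax d k := by
  induction k using Nat.twoStepInduction with
  | zero => exact ⟨∅, by simp [pathMax]⟩
  | one =>
    rcases le_total (d 0) 0 with h | h
    · exact ⟨∅, by simp [pathMax, h]⟩
    · exact ⟨{0}, by simp [pathMax, h]⟩
  | more k ih1 ih2 =>
    rcases le_total (pathMax d k + d (k + 1)) (pathMax d (k + 1)) with h | h
    · obtain ⟨A, h1, h2, h3⟩ := ih2
      exact ⟨A, fun i hi => (h1 i hi).trans (by omega), h2, by simp [pathMax, h, h3]⟩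
    · obtain ⟨A, h1, h2, h3⟩ := ih1
      have hk : k + 1 ∉ A := fun hh => by have := h1 _ hh; omega
      refine ⟨insert (k + 1) A, ?_, ?_, ?_⟩
      · intro i hi
        rcases Finset.mem_insert.mp hi with rfl | hi
        · omega
        · have := h1 _ hi; omega
      · intro i hi hi'
        rcases Finset.mem_insert.mp hi with rfl | hi <;>
          rcases Finset.mem_insert.mp hi' with h' | hi'
        · omega
        · have := h1 _ hi'; omega
        · have := h1 _ hi; omega
        · exact h2 _ hi hi'
      · rw [Finset.sum_insert hk, h3]
        rw [pathMax, max_eq_right h, add_comm]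

theorem val_add_one' {p : ℕ} (v : Fin (p + 3)) :
    (v + 1).val = if v.val = p + 2 then 0 else v.val + 1 := by
  rw [Fin.val_add_one]
  simp [Fin.ext_iff, Fin.val_last]

theorem val_sub_one' {p : ℕ} (v : Fin (p + 3)) :
    (v - 1).val = if v.val = 0 then p + 2 else v.val - 1 := by
  obtain ⟨u, rfl⟩ : ∃ u, v = u + 1 := ⟨v - 1, by simp⟩
  have := u.2
  rw [add_sub_cancel_right, val_add_one']
  split_ifs <;> simp_all

/-- Let `A` and `B` be independent in the path `0, …, p + 2`. If `A` avoids both ends of the path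
and `B` contains its first vertex, the two sets are exchanged along an initial segment to produce two sets independent in the cycle; where no
such exchange is possible, `A` and `B` partition the vertex set. -/
theorem uncross {p s : ℕ} {d : Fin (p + 3) → ℤ} (hA : ∀ A, Indep A → ∑ v ∈ A, d v ≤ s)
    (hd : ∑ v, d v ≤ 2 * s) {A B : Finset (Fin (p + 3))}
    (hAp : ∀ v ∈ A, v.val ≠ p + 2 → v + 1 ∉ A) (hBp : ∀ v ∈ B, v.val ≠ p + 2 → v + 1 ∉ B)
    (hA0 : 0 ∉ A) (hAl : Fin.last (p + 2) ∉ A) (hB0 : 0 ∈ B) :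
    ∑ v ∈ A, d v + ∑ v ∈ B, d v ≤ 2 * s := by
  by_cases hsw : ∃ i : Fin (p + 3), i.val ≠ p + 2 ∧ ¬ (i ∈ A ∧ i + 1 ∈ B) ∧ ¬ (i ∈ B ∧ i + 1 ∈ A)
  · obtain ⟨i, hi, h1, h2⟩ := hsw
    have key : ∀ A B : Finset (Fin (p + 3)), (∀ v ∈ A, v.val ≠ p + 2 → v + 1 ∉ A) →
        (∀ v ∈ B, v.val ≠ p + 2 → v + 1 ∉ B) → ¬ (i ∈ B ∧ i + 1 ∈ A) →
        (Fin.last (p + 2) ∉ A ∨ 0 ∉ B) →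
        Indep (Finset.univ.filter fun v => if v ≤ i then v ∈ B else v ∈ A) := by
      intro A B hAp hBp h2 hl v hv hv'
      simp only [Finset.mem_filter, Finset.mem_univ, true_and] at hv hv'
      by_cases hvl : v = Fin.last (p + 2)
      · subst hvl
        rw [Fin.last_add_one] at hv'
        rw [if_neg (by rw [Fin.le_def, Fin.val_last]; have := i.2; omega)] at hv
        rw [if_pos (Fin.zero_le _)] at hv'
        tauto
      · have hvl' : v.val ≠ p + 2 := fun h => hvl (Fin.ext h)
        have hv1 := val_add_one' v
        rw [if_neg hvl'] at hv1
        rcases lt_trichotomy v i with hlt | rfl | hgt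
        · rw [if_pos hlt.le] at hv
          rw [if_pos (by rw [Fin.le_def, hv1]; exact hlt)] at hv'
          exact hBp v hv hvl' hv'
        · rw [if_pos le_rfl] at hv
          rw [if_neg (by rw [Fin.le_def, hv1]; omega)] at hv'
          exact h2 ⟨hv, hv'⟩
        · rw [if_neg (not_le.mpr hgt)] at hv
          rw [if_neg (by rw [Fin.le_def, hv1]; have := Fin.lt_def.mp hgt; omega)] at hv'
          exact hAp v hv hvl' hv'
    have k1 := hA _ (key A B hAp hBp h2 (Or.inl hAl))
    have k2 := hA _ (key B A hBp hAp h1 (Or.inr hA0))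
    have e : ∑ v ∈ A, d v + ∑ v ∈ B, d v =
        ∑ v ∈ (Finset.univ.filter fun v => if v ≤ i then v ∈ B else v ∈ A), d v +
        ∑ v ∈ (Finset.univ.filter fun v => if v ≤ i then v ∈ A else v ∈ B), d v := by
      have eA : A = Finset.univ.filter (fun v => v ∈ A) := by ext; simp
      have eB : B = Finset.univ.filter (fun v => v ∈ B) := by ext; simp
      conv_lhs => rw [eA, eB]
      simp only [Finset.sum_filter, ← Finset.sum_add_distrib]
      refine Finset.sum_congr rfl fun v _ => ?_
      by_cases h : v ≤ i <;> simp [h, add_comm]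
    rw [e]
    linarith
  · push Not at hsw
    have alt : ∀ k : ℕ, ∀ hk : k < p + 3,
        ((⟨k, hk⟩ : Fin (p + 3)) ∈ A ↔ (⟨k, hk⟩ : Fin (p + 3)) ∉ B) := by
      intro k
      induction k with
      | zero =>
        intro hk
        exact ⟨fun h => absurd h hA0, fun h => absurd hB0 h⟩
      | succ k ih =>
        intro hk
        have := ih (by omega)
        have hs := hsw ⟨k, by omega⟩ (by simp; omega)
        have ha := hAp ⟨k, by omega⟩
        have hb := hBp ⟨k, by omega⟩
        have e : (⟨k, by omega⟩ : Fin (p + 3)) + 1 = ⟨k + 1, hk⟩ := by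
          ext
          rw [val_add_one']
          simp
          omega
        rw [e] at hs ha hb
        have hkn : k ≠ p + 2 := by omega
        simp only [ne_eq, hkn, not_false_eq_true, forall_const] at ha hb
        tauto
    have eB : B = Finset.univ \ A := by
      ext v
      have := alt v.1 v.2
      simp only [Fin.eta] at this
      simp
      tauto
    rw [eB, add_comm, Finset.sum_sdiff (Finset.subset_univ _)]
    exact hd

/-- Min-max formula for edge covers of a cycle with demands: the only obstructions to meeting `d`
with `s` edges are an independent set of weight above `s` and a total weight above `2 * s`.
After fixing the multiplicity `t` of the edge `{p + 2, 0}`, the optimal cover of the remaining path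
consists of the increments of `pathMax`; `t` is taken as large as the independent sets avoiding
both ends of the path permit. -/
theorem cov_of_indep {p s : ℕ} {d : Fin (p + 3) → ℤ} (hA : ∀ A, Indep A → ∑ v ∈ A, d v ≤ s)
    (hd : ∑ v, d v ≤ 2 * s) : Cov s d := by
  classical
  let T : Finset (Finset (Fin (p + 3))) := Finset.univ.filter fun A =>
    Indep A ∧ 0 ∉ A ∧ Fin.last (p + 2) ∉ A
  obtain ⟨A₀, hA₀, hmax⟩ := T.exists_max_image (fun A => ∑ v ∈ A, d v)
    ⟨∅, Finset.mem_filter.mpr ⟨Finset.mem_univ _, by simp [Indep]⟩⟩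
  simp only [T, Finset.mem_filter, Finset.mem_univ, true_and] at hA₀ hmax
  set t : ℤ := s - ∑ v ∈ A₀, d v with ht
  have ht0 : 0 ≤ t := by have := hA _ hA₀.1; omega
  let dd : ℕ → ℤ := fun i => if h : i < p + 3 then
    d ⟨i, h⟩ - (if i = 0 then t else 0) - (if i = p + 2 then t else 0) else 0
  let w : Fin (p + 3) → ℤ := fun v =>
    pathMax dd (v.val + 1) - pathMax dd v.val + (if v.val = p + 2 then t else 0)
  have hw0 : ∀ v, 0 ≤ w v := by
    intro v
    have := pathMax_le_succ dd v.val
    simp only [w]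
    split_ifs <;> omega
  have hdeg : ∀ v, d v ≤ deg w v := by
    intro v
    simp only [deg, w, val_sub_one']
    by_cases hv : v.val = 0
    · have hv' : v = 0 := Fin.ext hv
      have h1 := pathMax_le_succ dd (p + 2)
      have h2 : dd 0 ≤ pathMax dd 1 := by simp [pathMax]
      have h3 : dd 0 = d 0 - t := by simp [dd]
      have h4 : pathMax dd 0 = 0 := rfl
      subst hv'
      simp
      omega
    · obtain ⟨k, hk⟩ : ∃ k, v.val = k + 1 := ⟨v.val - 1, by omega⟩
      have hv2 := v.2
      have h1 : pathMax dd k + dd (k + 1) ≤ pathMax dd (k + 1 + 1) := by simp [pathMax]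
      have h2 : dd (k + 1) = d v - (if v.val = p + 2 then t else 0) := by
        simp only [dd, ← hk]
        simp [hv]
      have h3 : k ≠ p + 2 := by omega
      rw [h2] at h1
      simp only [hk] at h1 ⊢
      simp [h3]
      omega
  have hsum : ∑ v, w v = pathMax dd (p + 3) + t := by
    simp only [w, Finset.sum_add_distrib]
    congr 1
    · rw [Fin.sum_univ_eq_sum_range (fun i => pathMax dd (i + 1) - pathMax dd i),
        Finset.sum_range_sub]
      simp [pathMax]
    · rw [Fin.sum_univ_eq_sum_range (fun i => if i = p + 2 then t else 0)]
      simp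
  have hle : pathMax dd (p + 3) + t ≤ s := by
    obtain ⟨A, h1, h2, h3⟩ := pathMax_attained dd (p + 3)
    let B : Finset (Fin (p + 3)) := Finset.univ.filter fun v => v.val ∈ A
    have hBp : ∀ v ∈ B, v.val ≠ p + 2 → v + 1 ∉ B := by
      intro v hv hvl
      simp only [B, Finset.mem_filter, Finset.mem_univ, true_and] at hv ⊢
      rw [val_add_one', if_neg hvl]
      exact h2 _ hv
    have hsB : ∑ i ∈ A, dd i = ∑ v ∈ B, d v - (if 0 ∈ B then t else 0) -
        (if Fin.last (p + 2) ∈ B then t else 0) := by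
      have e1 : ∑ i ∈ A, dd i = ∑ i ∈ Finset.range (p + 3), if i ∈ A then dd i else 0 := by
        rw [← Finset.sum_filter]
        congr 1
        ext i
        simp only [Finset.mem_filter, Finset.mem_range]
        exact ⟨fun h => ⟨h1 _ h, h⟩, fun h => h.2⟩
      have e2 : ∑ v ∈ B, d v - (if 0 ∈ B then t else 0) -
        (if Fin.last (p + 2) ∈ B then t else 0) = ∑ v : Fin (p + 3), ((if v ∈ B then d v else 0)
          - (if v = 0 then (if v ∈ B then t else 0) else 0)
          - (if v = Fin.last (p + 2) then (if v ∈ B then t else 0) else 0)) := by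
        rw [Finset.sum_sub_distrib, Finset.sum_sub_distrib]
        simp
      rw [e1, e2, Finset.sum_range]
      refine Finset.sum_congr rfl fun v _ => ?_
      have hm : v ∈ B ↔ v.val ∈ A := by simp [B]
      simp only [hm]
      simp only [dd, Fin.ext_iff, Fin.val_last, Fin.val_zero, v.2, dif_pos, Fin.eta]
      split_ifs <;> simp
    rw [h3] at hsB
    by_cases b0 : 0 ∈ B <;> by_cases bl : Fin.last (p + 2) ∈ B
    · have := uncross hA hd (fun v hv _ => hA₀.1 v hv) hBp hA₀.2.1 hA₀.2.2 b0
      simp only [b0, bl, if_true] at hsB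
      omega
    all_goals
      have hBI : Indep B := by
        intro v hv hv'
        by_cases hvl : v = Fin.last (p + 2)
        · subst hvl
          rw [Fin.last_add_one] at hv'
          tauto
        · exact hBp v hv (fun h => hvl (Fin.ext h)) hv'
      have k1 := hA _ hBI
      simp only [b0, bl, if_true, if_false] at hsB
      try omega
    have := hmax B ⟨hBI, b0, bl⟩
    omega
  -- The cover found has at most `s` edges; the missing ones are added at the edge `{0, 1}`.
  let r : ℤ := s - ∑ v, w v
  have hr : 0 ≤ r := by simp only [r]; omega
  refine ⟨fun v => (w v + if v = 0 then r else 0).toNat, ?_, ?_⟩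
  · have : (((∑ v, (w v + if v = 0 then r else 0).toNat : ℕ)) : ℤ) = s := by
      rw [Nat.cast_sum]
      have : ∀ v, (((w v + if v = 0 then r else 0).toNat : ℕ) : ℤ)
          = w v + if v = 0 then r else 0 := by
        intro v
        have := hw0 v
        rw [Int.toNat_of_nonneg]
        split_ifs <;> omega
      simp only [this, Finset.sum_add_distrib]
      simp [r]
    exact_mod_cast this
  · intro v
    have h1 := hdeg v
    have h2 := hw0 v
    have h3 := hw0 (v - 1)
    simp only [deg] at h1 ⊢
    split_ifs <;> push_cast <;> omega

/-! ### The two combinatorial cores -/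

theorem Cov.exact {p s : ℕ} {d : Fin (p + 3) → ℤ} (h : Cov s d) (hs : ∑ v, d v = 2 * s) :
    ∃ w : Fin (p + 3) → ℕ, ∀ v, ((deg w v : ℕ) : ℤ) = d v := by
  obtain ⟨w, hw, hd⟩ := h
  refine ⟨w, fun v => ?_⟩
  have h1 : ∑ v, d v = ∑ v, ((deg w v : ℕ) : ℤ) := by
    rw [← Nat.cast_sum, sum_deg, hw, hs]
    push_cast
    rfl
  exact ((Finset.sum_eq_sum_iff_of_le fun v _ => hd v).mp h1 v (Finset.mem_univ v)).symm

theorem cov_of_deg {p s : ℕ} {d : Fin (p + 3) → ℤ} (w : Fin (p + 3) → ℕ)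
    (hw : ∀ v, ((deg w v : ℕ) : ℤ) = d v) (hs : ∑ v, d v = 2 * s) : Cov s d := by
  refine ⟨w, ?_, fun v => (hw v).ge⟩
  have h1 : ∑ v, d v = ∑ v, ((deg w v : ℕ) : ℤ) := Finset.sum_congr rfl fun v _ => (hw v).symm
  rw [← Nat.cast_sum, sum_deg, hs] at h1
  norm_cast at h1
  omega

/-- On an odd cycle an edge weighting is determined by its vertex degrees; here the value at
`{j, j + 1}` is recovered from degrees that cancel around the cycle. -/
theorem eq_zero_of_deg_odd {p m : ℕ} (hp : p + 3 = 2 * m + 1) (z : Fin (p + 3) → ℤ)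
    (j : Fin (p + 3))
    (hz : ∀ v, deg z v = (Pi.single (j + 1) 1 : Fin (p + 3) → ℤ) v
      - (Pi.single j 1 : Fin (p + 3) → ℤ) v) : z j = 0 := by
  have hne : j + 1 ≠ j := by simp
  have hlast : (j - (j + 1)).val = p + 2 := by
    rw [show j - (j + 1) = 0 - 1 by abel, val_sub_one']
    simp
  have alt : ∀ k : ℕ, ∀ v : Fin (p + 3), (v - (j + 1)).val = k → k ≤ p + 1 →
      z v = (-1) ^ k * z (j + 1) := by
    intro k
    induction k with
    | zero =>
      intro v hv _
      rw [sub_eq_zero.mp (Fin.ext hv), pow_zero, one_mul]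
    | succ k ih =>
      intro v hv hk
      have n1 : v ≠ j + 1 := by
        rintro rfl
        simp at hv
      have n2 : v ≠ j := by
        rintro rfl
        omega
      have h := hz v
      rw [Pi.single_eq_of_ne n1, Pi.single_eq_of_ne n2, deg] at h
      have h' := ih (v - 1) (by
        rw [show v - 1 - (j + 1) = v - (j + 1) - 1 by abel, val_sub_one', hv]
        simp) (by omega)
      rw [pow_succ]
      linarith
  have h1 := alt (p + 1) (j - 1) (by
    rw [show j - 1 - (j + 1) = j - (j + 1) - 1 by abel, val_sub_one', hlast]
    simp) le_rfl
  rw [Odd.neg_one_pow ⟨m - 1, by omega⟩] at h1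
  have h2 := hz j
  have h3 := hz (j + 1)
  rw [deg, add_sub_cancel_right, Pi.single_eq_same, Pi.single_eq_of_ne hne] at h3
  rw [deg, Pi.single_eq_same, Pi.single_eq_of_ne hne.symm] at h2
  linarith

theorem sum_single_one {p : ℕ} (j : Fin (p + 3)) :
    ∑ v, (Pi.single j 1 : Fin (p + 3) → ℤ) v = 1 := by
  simp

/-- The odd case. Minimality of `d` makes every cover of `d` with one unit of demand removed at a
vertex `j` exact, and the multiplicities of the edges at `j` in these covers fit together to
a cover of `d - 1`. -/
theorem odd_core {p m s : ℕ} (hp : p + 3 = 2 * m + 1) {d : Fin (p + 3) → ℤ} (h1 : ¬ Cov s d)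
    (h2 : ∀ j, Cov s (d - Pi.single j 1)) : Cov (s - m) (fun v => d v - 1) := by
  have hlow : 2 * (s : ℤ) < ∑ v, d v := by
    by_contra hcon
    refine h1 (cov_of_indep (fun A hA => ?_) (by omega))
    have : ∃ j, j ∉ A := by
      by_contra! hall
      exact hA 0 (hall _) (hall _)
    obtain ⟨j, hj⟩ := this
    have h3 := (h2 j).sum_le hA
    have h4 : ∑ v ∈ A, (d - Pi.single j 1 : Fin (p + 3) → ℤ) v = ∑ v ∈ A, d v := by
      refine Finset.sum_congr rfl fun v hv => ?_
      have : v ≠ j := fun h => hj (h ▸ hv)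
      simp [this]
    rwa [h4] at h3
  have hsub : ∀ j, ∑ v, (d - Pi.single j 1 : Fin (p + 3) → ℤ) v = ∑ v, d v - 1 := by
    intro j
    simp only [Pi.sub_apply, Finset.sum_sub_distrib, sum_single_one]
  have hsum : ∑ v, d v = 2 * s + 1 := by
    have := (h2 0).sum_univ_le
    rw [hsub] at this
    omega
  have hex : ∀ j, ∃ w : Fin (p + 3) → ℕ, ∀ v, ((deg w v : ℕ) : ℤ) = (d - Pi.single j 1 : Fin (p + 3) → ℤ) v :=
    fun j => (h2 j).exact (by rw [hsub]; omega)
  choose w hw using hex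
  have hcons : ∀ j, w j j = w (j + 1) j := by
    intro j
    have := eq_zero_of_deg_odd hp (fun v => (w j v : ℤ) - w (j + 1) v) j (by
      intro v
      have a1 := hw j v
      have a2 := hw (j + 1) v
      simp only [deg, Pi.sub_apply] at a1 a2 ⊢
      push_cast at a1 a2
      linarith)
    exact_mod_cast sub_eq_zero.mp this
  have hdeg : ∀ v, ((deg (fun u => w u u) v : ℕ) : ℤ) = d v - 1 := by
    intro v
    have a1 := hw v v
    have a2 := hcons (v - 1)
    simp only [sub_add_cancel] at a2
    simp only [deg, Pi.sub_apply, Pi.single_eq_same] at a1 ⊢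
    rw [a2]
    exact a1
  have htot : ∑ v, (d v - 1) = 2 * (s : ℤ) - 2 * m := by
    rw [Finset.sum_sub_distrib, hsum]
    simp
    omega
  have hms : m ≤ s := by
    have : 0 ≤ ∑ v, (d v - 1) := Finset.sum_nonneg fun v _ => by rw [← hdeg]; positivity
    omega
  refine cov_of_deg _ hdeg ?_
  rw [htot]
  push_cast [hms]
  ring

/-- On an odd cycle the complement of a vertex `j` has a perfect matching. -/
theorem matching_odd {p m : ℕ} (hp : p + 3 = 2 * m + 1) (j : Fin (p + 3)) :
    ∃ M : Fin (p + 3) → ℕ, ∀ v, ((deg M v : ℕ) : ℤ) = 1 - (Pi.single j 1 : Fin (p + 3) → ℤ) v := by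
  refine ⟨fun v => (v - j).val % 2, fun v => ?_⟩
  have e : v - 1 - j = v - j - 1 := by abel
  simp only [deg, e, val_sub_one']
  have hv := (v - j).2
  by_cases h : v = j
  · subst h
    simp
    omega
  · have h0 : (v - j).val ≠ 0 := fun h0 => h (sub_eq_zero.mp (Fin.ext h0))
    rw [if_neg h0, Pi.single_eq_of_ne h]
    omega

theorem odd_conv {p m s : ℕ} (hp : p + 3 = 2 * m + 1) (hms : m ≤ s) {d : Fin (p + 3) → ℤ}
    (w : Fin (p + 3) → ℕ) (hw : ∑ v, w v = s - m) (hd : ∀ v, d v = 1 + (deg w v : ℕ)) :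
    ¬ Cov s d ∧ ∀ j, Cov s (d - Pi.single j 1) := by
  have hsum : ∑ v, d v = 2 * s + 1 := by
    simp only [hd, Finset.sum_add_distrib]
    rw [← Nat.cast_sum, sum_deg, hw]
    push_cast [hms]
    simp
    omega
  refine ⟨fun h => ?_, fun j => ?_⟩
  · have := h.sum_univ_le
    omega
  · obtain ⟨M, hM⟩ := matching_odd hp j
    refine cov_of_deg (fun v => w v + M v) (fun v => ?_) ?_
    · have := hM v
      have := hd v
      simp only [deg, Pi.sub_apply] at *
      push_cast at *
      linarith
    · simp only [Pi.sub_apply, Finset.sum_sub_distrib, sum_single_one]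
      omega

/-- The vertices of parity `b`; on an even cycle these two sets are the colour classes. -/
def parityClass {p : ℕ} (b : ℕ) : Finset (Fin (p + 3)) := Finset.univ.filter fun v => v.val % 2 = b

theorem indep_parityClass {p m : ℕ} (hp : p + 3 = 2 * m) (b : ℕ) :
    Indep (parityClass b : Finset (Fin (p + 3))) := by
  intro v hv hv'
  simp only [parityClass, Finset.mem_filter, Finset.mem_univ, true_and, val_add_one'] at hv hv'
  have := v.2
  split_ifs at hv' <;> omega

/-- On an even cycle independent sets are the only obstruction, the bound on the total weight
being implied by the two colour classes. -/
theorem exists_indep_of_not_cov {p m s : ℕ} (hp : p + 3 = 2 * m) {d : Fin (p + 3) → ℤ}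
    (h : ¬ Cov s d) : ∃ A, Indep A ∧ (s : ℤ) < ∑ v ∈ A, d v := by
  by_contra! hcon
  refine h (cov_of_indep hcon ?_)
  have h0 := hcon _ (indep_parityClass hp 0)
  have h1 := hcon _ (indep_parityClass hp 1)
  have e : (parityClass 1 : Finset (Fin (p + 3))) = Finset.univ.filter fun v => ¬ v.val % 2 = 0 := by
    ext v
    simp [parityClass]
  have := Finset.sum_filter_add_sum_filter_not Finset.univ (fun v : Fin (p + 3) => v.val % 2 = 0) d
  rw [e] at h1
  rw [parityClass] at h0
  omega

theorem const_of_succ {p : ℕ} {R : Type*} (f : Fin (p + 3) → R) (h : ∀ v, f (v + 1) = f v)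
    (v : Fin (p + 3)) : f v = f 0 := by
  induction v using Fin.induction with
  | zero => rfl
  | succ i ih => rw [← Fin.coeSucc_eq_succ, h, ih]

/-- The even case. The independent sets that are too heavy for `s` edges are forced to be the two
colour classes, `c` being equal to `c j` off one and to `c k` off the other. So for each edge of one
of the two perfect matchings, `d` has an exact realization using it; some such realization contains
the whole matching, whose removal leaves a cover of `d - 1`. -/
theorem even_core {p m s : ℕ} (hp : p + 3 = 2 * m) {K : Type*} {d : Fin (p + 3) → ℤ}
    (c : Fin (p + 3) → K)
    (hc : ∀ u v, u ≠ v → ¬ Cov s (d - Pi.single u 1 - Pi.single v 1) → c u = c v)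
    {j k : Fin (p + 3)} (hj : ¬ Cov s (d - Pi.single j 1)) (hk : ¬ Cov s (d - Pi.single k 1))
    (hjk : c j ≠ c k) : Cov (s - (m - 1)) (fun v => d v - 1) := by
  have step : ∀ j, ¬ Cov s (d - Pi.single j 1) → ∃ A, Indep A ∧
      (s : ℤ) < ∑ v ∈ A, (d - Pi.single j 1 : Fin (p + 3) → ℤ) v ∧ ∀ v, v ∉ A → c v = c j := by
    intro j hj
    obtain ⟨A, hA, hs⟩ := exists_indep_of_not_cov hp hj
    refine ⟨A, hA, hs, fun v hv => ?_⟩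
    by_cases hvj : v = j
    · rw [hvj]
    refine (hc j v (Ne.symm hvj) fun hcov => ?_).symm
    have h3 := hcov.sum_le hA
    have h4 : ∑ u ∈ A, (d - Pi.single j 1 - Pi.single v 1 : Fin (p + 3) → ℤ) u = ∑ u ∈ A, (d - Pi.single j 1 : Fin (p + 3) → ℤ) u := by
      refine Finset.sum_congr rfl fun u hu => ?_
      have : u ≠ v := fun h => hv (h ▸ hu)
      simp [this]
    omega
  obtain ⟨A, hA, hAs, hAc⟩ := step j hj
  obtain ⟨B, hB, hBs, hBc⟩ := step k hk
  have hcover : ∀ v, v ∉ A → v ∈ B := by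
    intro v hv
    by_contra hv'
    exact hjk ((hAc v hv).symm.trans (hBc v hv'))
  have hdisj : ∀ v, v ∈ A → v ∉ B := fun v h1 h2 => hB v h2 (hcover _ (hA v h1))
  have hjA : j ∉ A := fun h => hjk (hBc j (hdisj j h))
  have hkA : k ∈ A := by
    by_contra h
    exact hjk (hAc k h).symm
  have hkB : k ∉ B := hdisj k hkA
  have hflip : ∀ v, v + 1 ∈ A ↔ v ∉ A := by
    intro v
    refine ⟨fun h h' => hA v h' h, fun h => ?_⟩
    by_contra h'
    exact hB v (hcover v h) (hcover _ h')
  have eB : B = Finset.univ \ A := by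
    ext v
    simp only [Finset.mem_sdiff, Finset.mem_univ, true_and]
    exact ⟨fun h h' => hdisj v h' h, hcover v⟩
  have hpair : ∀ u v, u ∈ A → v ∉ A → Cov s (d - Pi.single u 1 - Pi.single v 1) := by
    intro u v hu hv
    by_contra hcon
    have := hc u v (fun h => hv (h ▸ hu)) hcon
    rw [hAc v hv, hBc u (hdisj u hu)] at this
    exact hjk this.symm
  have hsing : ∀ (T : Finset (Fin (p + 3))) j, ∑ v ∈ T, (Pi.single j 1 : Fin (p + 3) → ℤ) v =
      if j ∈ T then 1 else 0 := by
    intro T j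
    simp [Pi.single_apply]
  have hkj := hpair k j hkA hjA
  have tA := hkj.sum_le hA
  have tB := hkj.sum_le hB
  simp only [Pi.sub_apply, Finset.sum_sub_distrib, hsing] at hAs hBs tA tB
  simp only [hjA, hkA, hkB, hcover j hjA, if_true, if_false] at hAs hBs tA tB
  have hsum : ∑ v, d v = 2 * s + 2 := by
    rw [← Finset.sum_sdiff (Finset.subset_univ A), ← eB]
    omega
  -- For `u ∈ A`, an exact realization of `d` that uses the edge `{u, u + 1}`.
  have hex : ∀ u, ∃ w : Fin (p + 3) → ℕ, u ∈ A → 1 ≤ w u ∧ ∀ v, ((deg w v : ℕ) : ℤ) = d v := by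
    intro u
    by_cases hu : u ∈ A
    · obtain ⟨w, hw⟩ := (hpair u (u + 1) hu (hA u hu)).exact (by
        simp only [Pi.sub_apply, Finset.sum_sub_distrib, sum_single_one]
        omega)
      refine ⟨fun v => w v + if v = u then 1 else 0, fun _ => ⟨by simp, fun v => ?_⟩⟩
      have := hw v
      simp only [deg, Pi.sub_apply, Pi.single_apply, sub_eq_iff_eq_add] at this ⊢
      push_cast at this ⊢
      linarith
    · exact ⟨0, fun h => absurd h hu⟩
  choose D hD using hex
  obtain ⟨u, huA, hmin⟩ := A.exists_min_image (fun u => D k u) ⟨k, hkA⟩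
  have hone : ∀ v ∈ A, 1 ≤ D u v := by
    intro v hv
    let f : Fin (p + 3) → ℤ := fun v =>
      if v ∈ A then (D u v : ℤ) - D k v else (D k v : ℤ) - D u v
    have hf : ∀ v, f (v + 1) = f v := by
      intro v
      have a1 := (hD u huA).2 (v + 1)
      have a2 := (hD k hkA).2 (v + 1)
      simp only [deg, add_sub_cancel_right] at a1 a2
      push_cast at a1 a2
      simp only [f, hflip]
      by_cases hv : v ∈ A <;> simp [hv] <;> linarith
    have e1 := (const_of_succ f hf v).trans (const_of_succ f hf u).symm
    simp only [f, hv, huA, if_true] at e1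
    have := hmin v hv
    have := (hD u huA).1
    omega
  have hdeg : ∀ v, ((deg (fun v => D u v - if v ∈ A then 1 else 0) v : ℕ) : ℤ) = d v - 1 := by
    intro v
    have a1 := (hD u huA).2 v
    have a2 := hflip (v - 1)
    rw [sub_add_cancel] at a2
    have a3 := hone v
    have a4 := hone (v - 1)
    simp only [deg] at a1 ⊢
    by_cases hv : v ∈ A
    · have hv' : v - 1 ∉ A := a2.mp hv
      have := a3 hv
      simp only [hv, hv', if_true, if_false]
      omega
    · have hv' : v - 1 ∈ A := by tauto
      have := a4 hv'
      simp only [hv, hv', if_true, if_false]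
      omega
  have htot : ∑ v, (d v - 1) = 2 * (s : ℤ) + 2 - 2 * m := by
    rw [Finset.sum_sub_distrib, hsum]
    simp
    omega
  have hms : m ≤ s + 1 := by
    have : 0 ≤ ∑ v, (d v - 1) := Finset.sum_nonneg fun v _ => by rw [← hdeg]; positivity
    omega
  refine cov_of_deg _ hdeg ?_
  rw [htot]
  omega

/-- On an even cycle the complement of two vertices of opposite parity has a perfect matching. -/
theorem matching_even {p m : ℕ} (hp : p + 3 = 2 * m) {a b : Fin (p + 3)}
    (hab : a.val % 2 ≠ b.val % 2) :
    ∃ M : Fin (p + 3) → ℕ, ∀ v, ((deg M v : ℕ) : ℤ) = 1 - (Pi.single a 1 : Fin (p + 3) → ℤ) v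
      - (Pi.single b 1 : Fin (p + 3) → ℤ) v := by
  set q := (b - a).val with hq
  have hqo : q % 2 = 1 := by
    have h1 := a.2
    have h2 := b.2
    rw [hq, Fin.val_sub]
    rw [Nat.mod_mod_of_dvd _ (show 2 ∣ p + 3 from ⟨m, hp⟩)]
    omega
  refine ⟨fun v => if ((v - a).val < q ∧ (v - a).val % 2 = 1) ∨
    (q < (v - a).val ∧ (v - a).val % 2 = 0) then 1 else 0, fun v => ?_⟩
  have e : v - 1 - a = v - a - 1 := by abel
  have hva : v = a ↔ (v - a).val = 0 := by
    rw [← sub_eq_zero, Fin.ext_iff]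
    rfl
  have hvb : v = b ↔ (v - a).val = q := by
    rw [hq, ← Fin.ext_iff, sub_left_inj]
  have hq2 : q < p + 3 := (b - a).2
  have hr := (v - a).2
  simp only [deg, e, val_sub_one', Pi.single_apply, hva, hvb]
  generalize (v - a).val = r at *
  split_ifs <;> omega

theorem even_conv {p m s : ℕ} (hp : p + 3 = 2 * m) (hms : m - 1 ≤ s) {d : Fin (p + 3) → ℤ}
    (w : Fin (p + 3) → ℕ) (hw : ∑ v, w v = s - (m - 1)) (hd : ∀ v, d v = 1 + (deg w v : ℕ)) :
    (∀ j, ¬ Cov s (d - Pi.single j 1)) ∧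
    ∀ u v, u.val % 2 ≠ v.val % 2 → Cov s (d - Pi.single u 1 - Pi.single v 1) := by
  have hsum : ∑ v, d v = 2 * s + 2 := by
    simp only [hd, Finset.sum_add_distrib]
    rw [← Nat.cast_sum, sum_deg, hw]
    push_cast [hms]
    simp
    omega
  have hpair : ∀ u v, u.val % 2 ≠ v.val % 2 → Cov s (d - Pi.single u 1 - Pi.single v 1) := by
    intro a b hab
    obtain ⟨M, hM⟩ := matching_even hp hab
    refine cov_of_deg (fun v => w v + M v) (fun v => ?_) ?_
    · have := hM v
      have := hd v
      simp only [deg, Pi.sub_apply] at *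
      push_cast at *
      linarith
    · simp only [Pi.sub_apply, Finset.sum_sub_distrib, sum_single_one]
      omega
  refine ⟨fun j h => ?_, hpair⟩
  have := h.sum_univ_le
  simp only [Pi.sub_apply, Finset.sum_sub_distrib, sum_single_one] at this
  omega

/-! ### Koszul homology in degrees `n - 1` and `n - 2` -/

/-- `F` is a face of the upper Koszul complex of `I` in multidegree `a`. -/
def Face {K : Type} [Field K] {n : ℕ} (I : Ideal (S K n)) (a : Fin n →₀ ℕ) (F : Finset (Fin n)) :
    Prop := expF F ≤ a ∧ (monomial (a - expF F) (1 : K) : S K n) ∈ I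

theorem expF_apply {n : ℕ} (F : Finset (Fin n)) (v : Fin n) : expF F v = if v ∈ F then 1 else 0 := by
  simp [expF, Finsupp.finsetSum_apply, Finsupp.single_apply]

section Homology

variable {K : Type} [Field K] {n : ℕ} {I : Ideal (S K n)} {a : Fin n →₀ ℕ}

theorem Face.mono {F G : Finset (Fin n)} (h : Face I a F) (hGF : G ⊆ F) : Face I a G := by
  obtain ⟨h1, h2⟩ := h
  have hle : expF G ≤ expF F := by
    intro v
    rw [expF_apply, expF_apply]
    by_cases hv : v ∈ G
    · simp [hv, hGF hv]
    · simp [hv]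
  refine ⟨hle.trans h1, ?_⟩
  have e : a - expF G = (a - expF F) + (expF F - expF G) := by
    rw [tsub_add_tsub_cancel h1 hle]
  rw [e, ← mul_one (1 : K), ← monomial_mul]
  exact Ideal.mul_mem_right _ _ h2

open Classical in
/-- The coefficient of a Koszul chain at an arbitrary subset, zero at non-faces. -/
noncomputable def coef {i : ℕ} (x : KB I a i →₀ K) (F : Finset (Fin n)) : K :=
  if h : F.card = i ∧ Face I a F then x ⟨F, h⟩ else 0

open Classical in
/-- The Koszul chain in homological degree `i` whose coefficients at faces are given by `f`. -/
noncomputable def chain (I : Ideal (S K n)) (a : Fin n →₀ ℕ) (i : ℕ) (f : Finset (Fin n) → K) :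
    KB I a i →₀ K :=
  Finsupp.equivFunOnFinite.symm fun F => f F.1

theorem coef_of_not_face {i : ℕ} (x : KB I a i →₀ K) {F : Finset (Fin n)} (h : ¬ Face I a F) :
    coef x F = 0 := dif_neg fun h' => h h'.2

theorem coef_chain {i : ℕ} (f : Finset (Fin n) → K) {F : Finset (Fin n)} (hF : F.card = i)
    (hf : ¬ Face I a F → f F = 0) : coef (chain I a i f) F = f F := by
  by_cases h : Face I a F
  · rw [coef, dif_pos ⟨hF, h⟩]
    rfl
  · rw [coef_of_not_face _ h, hf h]

theorem chain_ext {i : ℕ} {x y : KB I a i →₀ K}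
    (h : ∀ F : Finset (Fin n), F.card = i → coef x F = coef y F) : x = y := by
  ext ⟨F, hF⟩
  have := h F hF.1
  rwa [coef, coef, dif_pos (show F.card = i ∧ Face I a F from hF),
    dif_pos (show F.card = i ∧ Face I a F from hF)] at this

theorem coef_zero {i : ℕ} (F : Finset (Fin n)) : coef (0 : KB I a i →₀ K) F = 0 := by
  simp [coef]

theorem coef_add {i : ℕ} (x y : KB I a i →₀ K) (F : Finset (Fin n)) :
    coef (x + y) F = coef x F + coef y F := by
  unfold coef
  split_ifs <;> simp

theorem coef_single {i : ℕ} (G : KB I a i) (r : K) (F : Finset (Fin n)) :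
    coef (Finsupp.single G r) F = if G.1 = F then r else 0 := by
  classical
  unfold coef
  by_cases h : G.1 = F
  · subst h
    rw [dif_pos (show G.1.card = i ∧ Face I a G.1 from G.2), if_pos rfl]
    exact Finsupp.single_eq_same
  · rw [if_neg h]
    split_ifs with h'
    · exact Finsupp.single_eq_of_ne fun e => h (congrArg Subtype.val e).symm
    · rfl

theorem coef_smul {i : ℕ} (r : K) (x : KB I a i →₀ K) (F : Finset (Fin n)) :
    coef (r • x) F = r * coef x F := by
  unfold coef
  split_ifs <;> simp

theorem coef_sum {i : ℕ} {ι : Type*} (s : Finset ι) (x : ι → (KB I a i →₀ K))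
    (F : Finset (Fin n)) : coef (∑ j ∈ s, x j) F = ∑ j ∈ s, coef (x j) F := by
  classical
  induction s using Finset.induction_on with
  | empty => simp [coef_zero]
  | insert j s hj ih => rw [Finset.sum_insert hj, Finset.sum_insert hj, coef_add, ih]

/-- The Koszul differential with subsets indexed by their complements. -/
theorem coef_kd {i : ℕ} (x : KB I a (i + 1) →₀ K) {T : Finset (Fin n)} :
    coef (kd I a i x) Tᶜ =
      ∑ j ∈ T, (-1 : K) ^ (j.val + (T.filter (· < j)).card) * coef x (T.erase j)ᶜ := by
  classical
  have hsign : ∀ j : Fin n, (-1 : K) ^ (j.val + (T.filter (· < j)).card) =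
      (-1) ^ (Tᶜ.filter (· < j)).card := by
    intro j
    have h1 : (Tᶜ.filter (· < j)).card + (T.filter (· < j)).card = j.val := by
      rw [← Finset.card_union_of_disjoint, ← Finset.filter_union, Finset.union_comm,
        Finset.union_compl]
      · rw [← Fin.card_Iio j]
        congr 1
        ext y
        simp
      · exact Finset.disjoint_filter_filter disjoint_compl_left
    rw [← h1, add_assoc, pow_add, ← two_mul, pow_mul]
    simp
  induction x using Finsupp.induction_linear with
  | zero => simp [coef_zero]
  | add x y hx hy =>
    simp only [map_add, coef_add, mul_add, Finset.sum_add_distrib, hx, hy]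
  | single F r =>
    rw [kd, Finsupp.lsum_single, LinearMap.toSpanSingleton_apply, coef_smul, coef_sum,
      Finset.mul_sum]
    simp only [coef_smul, coef_single, hsign]
    rw [Finset.sum_attach F.1 (fun j => r * ((-1 : K) ^ (F.1.filter (· < j)).card *
      (if F.1.erase j = Tᶜ then 1 else 0)))]
    rw [← Finset.univ_inter F.1, ← Finset.sum_ite_mem]
    conv_rhs => rw [← Finset.univ_inter T, ← Finset.sum_ite_mem]
    simp only [Finset.univ_inter]
    refine Finset.sum_congr rfl fun j _ => ?_
    have hiff : (j ∈ F.1 ∧ F.1.erase j = Tᶜ) ↔ (j ∈ T ∧ F.1 = (T.erase j)ᶜ) := by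
      constructor
      · rintro ⟨h1, h2⟩
        have hj : j ∈ T := by
          have : j ∉ Tᶜ := h2 ▸ Finset.notMem_erase j _
          simpa using this
        exact ⟨hj, by rw [Finset.compl_erase, ← h2, Finset.insert_erase h1]⟩
      · rintro ⟨h1, h2⟩
        rw [h2, Finset.compl_erase]
        exact ⟨Finset.mem_insert_self _ _, Finset.erase_insert (by simpa using h1)⟩
    by_cases h : j ∈ F.1 ∧ F.1.erase j = Tᶜ
    · have h' := hiff.mp h
      have e : F.1.filter (· < j) = Tᶜ.filter (· < j) := by
        rw [← h.2]
        ext y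
        simp only [Finset.mem_filter, Finset.mem_erase]
        exact ⟨fun hy => ⟨⟨hy.2.ne, hy.1⟩, hy.2⟩, fun hy => ⟨hy.1.2, hy.2⟩⟩
      rw [if_pos h.1, if_pos h.2, if_pos h'.1, if_pos h'.2, e]
      ring
    · have h' := mt hiff.mpr h
      by_cases h1 : j ∈ F.1 <;> by_cases h2 : j ∈ T <;> simp_all

theorem nontrivial_Hmod_succ {i : ℕ} : Nontrivial (Hmod I a (i + 1)) ↔
    ∃ z : KB I a (i + 1) →₀ K, kd I a i z = 0 ∧ z ∉ LinearMap.range (kd I a (i + 1)) := by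
  rw [Submodule.nontrivial_iff_ne_bot, Submodule.ne_bot_iff]
  constructor
  · rintro ⟨_, ⟨z, hz, rfl⟩, hne⟩
    exact ⟨z, hz, fun h => hne ((Submodule.Quotient.mk_eq_zero _).mpr h)⟩
  · rintro ⟨z, hz, hne⟩
    exact ⟨_, ⟨z, hz, rfl⟩, fun h => hne ((Submodule.Quotient.mk_eq_zero _).mp h)⟩

theorem exists_lt_of_card_two {T : Finset (Fin n)} (h : T.card = 2) :
    ∃ u v, u < v ∧ T = {u, v} := by
  obtain ⟨u, v, huv, rfl⟩ := Finset.card_eq_two.mp h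
  rcases lt_or_gt_of_ne huv with h | h
  · exact ⟨u, v, h, rfl⟩
  · exact ⟨v, u, h, Finset.pair_comm u v⟩

theorem exists_lt_of_card_three {T : Finset (Fin n)} (h : T.card = 3) :
    ∃ u v w, u < v ∧ v < w ∧ T = {u, v, w} := by
  have hne : T.Nonempty := Finset.card_pos.mp (by omega)
  have hm := T.min'_mem hne
  obtain ⟨v, w, hvw, e⟩ := exists_lt_of_card_two (T := T.erase (T.min' hne))
    (by rw [Finset.card_erase_of_mem hm, h])
  refine ⟨T.min' hne, v, w, ?_, hvw, ?_⟩
  · exact Finset.min'_lt_of_mem_erase_min' T hne (by rw [e]; simp)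
  · rw [← e, Finset.insert_erase hm]

theorem coef_kd_one {i : ℕ} (x : KB I a (i + 1) →₀ K) (u : Fin n) :
    coef (kd I a i x) {u}ᶜ = (-1) ^ u.val * coef x Finset.univ := by
  rw [coef_kd]
  simp [Finset.filter_singleton]

theorem coef_kd_two {i : ℕ} (x : KB I a (i + 1) →₀ K) {u v : Fin n} (h : u < v) :
    coef (kd I a i x) {u, v}ᶜ =
      (-1) ^ u.val * coef x {v}ᶜ - (-1) ^ v.val * coef x {u}ᶜ := by
  have e1 : ({u, v} : Finset (Fin n)).erase u = {v} := by
    ext y; simp only [Finset.mem_erase, Finset.mem_insert, Finset.mem_singleton]; grind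
  have e2 : ({u, v} : Finset (Fin n)).erase v = {u} := by
    ext y; simp only [Finset.mem_erase, Finset.mem_insert, Finset.mem_singleton]; grind
  have f1 : ({u, v} : Finset (Fin n)).filter (· < u) = ∅ := by
    ext y; simp; grind
  have f2 : ({u, v} : Finset (Fin n)).filter (· < v) = {u} := by
    ext y; simp; grind
  rw [coef_kd, Finset.sum_pair h.ne, e1, e2, f1, f2]
  simp [pow_succ, sub_eq_add_neg]

theorem coef_kd_three {i : ℕ} (x : KB I a (i + 1) →₀ K) {u v w : Fin n} (h : u < v) (h' : v < w) :
    coef (kd I a i x) {u, v, w}ᶜ = (-1) ^ u.val * coef x {v, w}ᶜ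
      - (-1) ^ v.val * coef x {u, w}ᶜ + (-1) ^ w.val * coef x {u, v}ᶜ := by
  have e1 : ({u, v, w} : Finset (Fin n)).erase u = {v, w} := by
    ext y; simp only [Finset.mem_erase, Finset.mem_insert, Finset.mem_singleton]; grind
  have e2 : ({u, v, w} : Finset (Fin n)).erase v = {u, w} := by
    ext y; simp only [Finset.mem_erase, Finset.mem_insert, Finset.mem_singleton]; grind
  have e3 : ({u, v, w} : Finset (Fin n)).erase w = {u, v} := by
    ext y; simp only [Finset.mem_erase, Finset.mem_insert, Finset.mem_singleton]; grind
  have f1 : ({u, v, w} : Finset (Fin n)).filter (· < u) = ∅ := by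
    ext y; simp; grind
  have f2 : ({u, v, w} : Finset (Fin n)).filter (· < v) = {u} := by
    ext y; simp; grind
  have f3 : ({u, v, w} : Finset (Fin n)).filter (· < w) = {u, v} := by
    ext y; simp; grind
  rw [coef_kd, Finset.sum_insert (by simp; grind), Finset.sum_pair h'.ne, e1, e2, e3, f1, f2, f3,
    Finset.card_pair h.ne]
  simp [pow_succ]
  ring

theorem neg_one_pow_mul_self (k : ℕ) : (-1 : K) ^ k * (-1) ^ k = 1 := by
  rw [← mul_pow]
  simp

theorem exists_compl_of_card {i k : ℕ} (hn : n = i + k) {F : Finset (Fin n)} (hF : F.card = i) :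
    ∃ T : Finset (Fin n), T.card = k ∧ F = Tᶜ :=
  ⟨Fᶜ, by rw [Finset.card_compl, Fintype.card_fin]; omega, (compl_compl F).symm⟩

theorem card_compl_pair {i : ℕ} (hn : n = i + 2) {u v : Fin n} (h : u ≠ v) :
    ({u, v}ᶜ : Finset (Fin n)).card = i := by
  rw [Finset.card_compl, Fintype.card_fin, Finset.card_pair h]
  omega

theorem card_compl_singleton {i : ℕ} (hn : n = i + 1) (u : Fin n) :
    ({u}ᶜ : Finset (Fin n)).card = i := by
  rw [Finset.card_compl, Fintype.card_fin, Finset.card_singleton]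
  omega

/-- Homology in degree `n - 1`: the upper Koszul complex must be the boundary of the full simplex,
equivalently `x^(a - 1)` is a socle element modulo `I`. -/
theorem nontrivial_Hmod_top {q : ℕ} (hn : n = q + 2) : Nontrivial (Hmod I a (q + 1)) ↔
    ¬ Face I a Finset.univ ∧ ∀ u, Face I a {u}ᶜ := by
  have z0 : Fin n := ⟨0, by omega⟩
  rw [nontrivial_Hmod_succ]
  constructor
  · rintro ⟨z, hz, hr⟩
    have hconst : ∀ u v, u < v → (-1) ^ u.val * coef z {u}ᶜ = (-1) ^ v.val * coef z {v}ᶜ := by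
      intro u v huv
      have h := coef_kd_two z huv
      rw [hz, coef_zero] at h
      have h1 := neg_one_pow_mul_self (K := K) u.val
      have h2 := neg_one_pow_mul_self (K := K) v.val
      linear_combination (-1) ^ u.val * (-1) ^ v.val * h + (-1) ^ v.val * coef z {v}ᶜ * h1
        - (-1) ^ u.val * coef z {u}ᶜ * h2
    have hall : ∀ u v, (-1) ^ u.val * coef z {u}ᶜ = (-1) ^ v.val * coef z {v}ᶜ := by
      intro u v
      rcases lt_trichotomy u v with h | rfl | h
      · exact hconst u v h
      · rfl
      · exact (hconst v u h).symm
    have hval : ∀ u, coef z {u}ᶜ = (-1) ^ u.val * ((-1) ^ z0.val * coef z {z0}ᶜ) := by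
      intro u
      rw [← hall u z0, ← mul_assoc, neg_one_pow_mul_self, one_mul]
    refine ⟨fun hf => hr ⟨chain I a (q + 2) fun _ => (-1) ^ z0.val * coef z {z0}ᶜ, ?_⟩,
      fun u => ?_⟩
    · refine chain_ext fun F hF => ?_
      obtain ⟨T, hT, rfl⟩ := exists_compl_of_card (k := 1) (by omega) hF
      obtain ⟨u, rfl⟩ := Finset.card_eq_one.mp hT
      rw [coef_kd_one, coef_chain _ (by simp [hn]) (fun h => absurd hf h), hval u]
    · by_contra hu
      refine hr ?_
      have : z = 0 := by
        refine chain_ext fun F hF => ?_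
        obtain ⟨T, hT, rfl⟩ := exists_compl_of_card (k := 1) (by omega) hF
        obtain ⟨v, rfl⟩ := Finset.card_eq_one.mp hT
        have h0 := hall v u
        rw [coef_of_not_face z hu, mul_zero] at h0
        rw [coef_zero]
        exact (mul_eq_zero.mp h0).resolve_left (pow_ne_zero _ (by simp))
      rw [this]
      exact Submodule.zero_mem _
  · rintro ⟨h1, h2⟩
    have hz : ∀ u : Fin n,
        coef (chain I a (q + 1) fun F => ∑ y ∈ Fᶜ, (-1 : K) ^ y.val) {u}ᶜ = (-1) ^ u.val := by
      intro u
      rw [coef_chain _ (card_compl_singleton hn u) (fun h => absurd (h2 u) h)]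
      simp
    refine ⟨chain I a (q + 1) fun F => ∑ y ∈ Fᶜ, (-1) ^ y.val, ?_, ?_⟩
    · refine chain_ext fun F hF => ?_
      obtain ⟨T, hT, rfl⟩ := exists_compl_of_card (k := 2) (by omega) hF
      obtain ⟨u, v, huv, rfl⟩ := exists_lt_of_card_two hT
      rw [coef_kd_two _ huv, hz, hz, coef_zero]
      ring
    · rintro ⟨y, hy⟩
      have h := hz z0
      rw [← hy, coef_kd_one, coef_of_not_face y h1, mul_zero] at h
      exact pow_ne_zero _ (by simp) h.symm

/-- Homology in degree `n - 2`. By Alexander duality it is the reduced `0`-th cohomology of the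
graph on the vertices `u` with `{u}ᶜ` not a face whose edges are the pairs `u, v` with `{u, v}ᶜ` not
a face; `c` is a locally constant but non-constant function on this graph. -/
theorem nontrivial_Hmod_subtop {q : ℕ} (hn : n = q + 3) : Nontrivial (Hmod I a (q + 1)) ↔
    ∃ c : Fin n → K, (∀ u v, u ≠ v → ¬ Face I a {u, v}ᶜ → c u = c v) ∧
      ∃ j k, ¬ Face I a {j}ᶜ ∧ ¬ Face I a {k}ᶜ ∧ c j ≠ c k := by
  rw [nontrivial_Hmod_succ]
  constructor
  · rintro ⟨z, hz, hr⟩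
    obtain ⟨z0, hz0⟩ : ∃ z0 : Fin n, z0.val = 0 := ⟨⟨0, by omega⟩, rfl⟩
    have hpos : ∀ u, u ≠ z0 → z0 < u := by
      intro u hu
      rw [Fin.lt_def]
      have : u.val ≠ z0.val := fun h => hu (Fin.ext h)
      omega
    let c : Fin n → K := fun u => if u = z0 then 0 else (-1) ^ u.val * coef z {z0, u}ᶜ
    have hzc : ∀ u v, u < v → coef z {u, v}ᶜ = (-1) ^ u.val * (-1) ^ v.val * (c v - c u) := by
      intro u v huv
      have hv : v ≠ z0 := by
        rintro rfl
        rw [Fin.lt_def] at huv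
        omega
      have h2 := neg_one_pow_mul_self (K := K) v.val
      have h1 := neg_one_pow_mul_self (K := K) u.val
      by_cases hu : u = z0
      · subst hu
        simp only [c, hv, if_false, if_true, hz0, pow_zero]
        linear_combination - coef z {u, v}ᶜ * h2
      · have h := coef_kd_three z (hpos u hu) huv
        rw [hz, coef_zero, hz0, pow_zero] at h
        simp only [c, hv, hu, if_false]
        linear_combination - h - (-1) ^ u.val * coef z {z0, v}ᶜ * h2
          + (-1) ^ v.val * coef z {z0, u}ᶜ * h1
    refine ⟨c, ?_, ?_⟩
    · have key : ∀ u v, u < v → ¬ Face I a {u, v}ᶜ → c u = c v := by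
        intro u v huv hf
        have h := hzc u v huv
        rw [coef_of_not_face z hf] at h
        have h' := (mul_eq_zero.mp h.symm).resolve_left
          (mul_ne_zero (pow_ne_zero _ (by simp)) (pow_ne_zero _ (by simp)))
        exact (sub_eq_zero.mp h').symm
      intro u v huv hf
      rcases lt_or_gt_of_ne huv with h | h
      · exact key u v h hf
      · rw [Finset.pair_comm] at hf
        exact (key v u h hf).symm
    · by_contra! hcon
      have hl : ∃ l : K, ∀ j, ¬ Face I a {j}ᶜ → c j = l := by
        by_cases he : ∃ k, ¬ Face I a {k}ᶜ
        · obtain ⟨k, hk⟩ := he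
          exact ⟨c k, fun j hj => hcon j k hj hk⟩
        · push Not at he
          exact ⟨0, fun j hj => absurd (he j) hj⟩
      obtain ⟨l, hl⟩ := hl
      refine hr ⟨chain I a (q + 2) fun F => ∑ y ∈ Fᶜ, (-1) ^ y.val * (c y - l), ?_⟩
      have hx : ∀ u, coef (chain I a (q + 2) fun F => ∑ y ∈ Fᶜ, (-1) ^ y.val * (c y - l)) {u}ᶜ =
          (-1) ^ u.val * (c u - l) := by
        intro u
        rw [coef_chain _ (card_compl_singleton hn u)]
        · simp
        · intro hu
          simp [hl u hu]
      refine chain_ext fun F hF => ?_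
      obtain ⟨T, hT, rfl⟩ := exists_compl_of_card (k := 2) (by omega) hF
      obtain ⟨u, v, huv, rfl⟩ := exists_lt_of_card_two hT
      rw [coef_kd_two _ huv, hx, hx, hzc u v huv]
      ring
  · rintro ⟨c, hc, j, k, hj, hk, hjk⟩
    let f : Finset (Fin n) → K := fun F =>
      ∑ u ∈ Fᶜ, ∑ v ∈ Fᶜ, if u < v then (-1) ^ u.val * (-1) ^ v.val * (c v - c u) else 0
    have hf : ∀ u v, u < v → f {u, v}ᶜ = (-1) ^ u.val * (-1) ^ v.val * (c v - c u) := by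
      intro u v huv
      simp only [f, compl_compl]
      rw [Finset.sum_pair huv.ne, Finset.sum_pair huv.ne, Finset.sum_pair huv.ne]
      simp [huv, huv.not_gt]
    have hz : ∀ u v, u < v → coef (chain I a (q + 1) f) {u, v}ᶜ =
        (-1) ^ u.val * (-1) ^ v.val * (c v - c u) := by
      intro u v huv
      rw [coef_chain _ (card_compl_pair hn huv.ne), hf u v huv]
      intro hnf
      rw [hf u v huv, hc u v huv.ne hnf, sub_self, mul_zero]
    refine ⟨chain I a (q + 1) f, ?_, ?_⟩
    · refine chain_ext fun F hF => ?_
      obtain ⟨T, hT, rfl⟩ := exists_compl_of_card (k := 3) (by omega) hF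
      obtain ⟨u, v, w, huv, hvw, rfl⟩ := exists_lt_of_card_three hT
      rw [coef_kd_three _ huv hvw, hz u v huv, hz v w hvw, hz u w (huv.trans hvw), coef_zero]
      ring
    · rintro ⟨y, hy⟩
      have key : ∀ j k, j < k → ¬ Face I a {j}ᶜ → ¬ Face I a {k}ᶜ → c j = c k := by
        intro j k hlt hj hk
        have h := hz j k hlt
        rw [← hy, coef_kd_two y hlt, coef_of_not_face y hj, coef_of_not_face y hk, mul_zero,
          mul_zero, sub_self] at h
        have h' := (mul_eq_zero.mp h.symm).resolve_left
          (mul_ne_zero (pow_ne_zero _ (by simp)) (pow_ne_zero _ (by simp)))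
        exact (sub_eq_zero.mp h').symm
      rcases lt_trichotomy j k with h | rfl | h
      · exact hjk (key j k h hj hk)
      · exact hjk rfl
      · exact hjk (key k j h hk hj).symm

end Homology

/-! ### Powers of the complementary edge ideal -/

theorem aexp_apply {n : ℕ} (v : Fin n) : aexp n v = 1 := by
  simp [aexp, expF_apply]

/-- The generators of the `s`-th power of the complementary edge ideal: one for each multigraph
with `s` edges on the cycle. -/
theorem compIdeal_pow_eq {K : Type} [Field K] {p : ℕ} {G : SimpleGraph (Fin (p + 3))}
    (hadj : ∀ i j, G.Adj i j ↔ (j = i + 1 ∨ i = j + 1)) (s : ℕ) :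
    compIdeal K (p + 3) G ^ s = Ideal.span ((fun c => (monomial c 1 : S K (p + 3))) ''
      {c | ∃ w : Fin (p + 3) → ℕ, ∑ v, w v = s ∧ ∀ v, c v + deg w v = s}) := by
  have hgen : ∀ u v : Fin (p + 3),
      (aexp (p + 3) - Finsupp.single u 1 - Finsupp.single (u + 1) 1 : Fin (p + 3) →₀ ℕ) v
      + ((if v = u then 1 else 0) + if v = u + 1 then 1 else 0) = 1 := by
    intro u v
    simp only [Finsupp.tsub_apply, aexp_apply, Finsupp.single_apply]
    have hne : u + 1 ≠ u := by simp
    by_cases h1 : v = u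
    · subst h1
      simp
    · by_cases h2 : v = u + 1
      · subst h2
        simp
      · simp [h1, h2, Ne.symm h1, Ne.symm h2]
  have hdeg : ∀ (w : Fin (p + 3) → ℕ) (u v : Fin (p + 3)),
      deg (fun y => w y + if y = u then 1 else 0) v = deg w v +
        ((if v = u then 1 else 0) + if v = u + 1 then 1 else 0) := by
    intro w u v
    simp only [deg, sub_eq_iff_eq_add]
    ring
  induction s with
  | zero =>
    rw [pow_zero, Ideal.one_eq_top, eq_comm, Ideal.eq_top_iff_one]
    exact Ideal.subset_span ⟨0, ⟨0, by simp, fun v => by simp [deg]⟩, rfl⟩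
  | succ s ih =>
    rw [pow_succ, ih, compIdeal, Ideal.span_mul_span']
    congr 1
    ext q
    constructor
    · rintro ⟨_, ⟨c, ⟨w, hw, hc⟩, rfl⟩, _, ⟨i, j, hij, rfl⟩, rfl⟩
      obtain ⟨u, hu⟩ : ∃ u, aexp (p + 3) - Finsupp.single i 1 - Finsupp.single j 1 =
          aexp (p + 3) - Finsupp.single u 1 - Finsupp.single (u + 1) 1 := by
        rcases (hadj i j).mp hij with rfl | rfl
        · exact ⟨i, rfl⟩
        · exact ⟨j, tsub_right_comm⟩
      rw [hu]
      refine ⟨c + (aexp (p + 3) - Finsupp.single u 1 - Finsupp.single (u + 1) 1),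
        ⟨fun y => w y + if y = u then 1 else 0, ?_, fun v => ?_⟩, ?_⟩
      · rw [Finset.sum_add_distrib, hw]
        simp
      · have h1 := hgen u v
        have h2 := hc v
        rw [hdeg, Finsupp.add_apply]
        omega
      · simp [monomial_mul]
    · rintro ⟨c, ⟨w, hw, hc⟩, rfl⟩
      obtain ⟨u, hu⟩ : ∃ u, w u ≠ 0 := by
        by_contra! h
        simp [h] at hw
      let w' : Fin (p + 3) → ℕ := fun y => w y - if y = u then 1 else 0
      have hww : w = fun y => w' y + if y = u then 1 else 0 := by
        funext y
        simp only [w']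
        split_ifs with h
        · subst h
          omega
        · rfl
      have hw' : ∑ v, w' v = s := by
        rw [hww, Finset.sum_add_distrib] at hw
        simpa using hw
      have hle : aexp (p + 3) - Finsupp.single u 1 - Finsupp.single (u + 1) 1 ≤ c := by
        intro v
        have h1 := hgen u v
        have h2 := hc v
        have h3 := deg_le_sum w' v
        rw [hww, hdeg] at h2
        omega
      refine ⟨_, ⟨c - (aexp (p + 3) - Finsupp.single u 1 - Finsupp.single (u + 1) 1),
        ⟨w', hw', fun v => ?_⟩, rfl⟩, _, ⟨u, u + 1, (hadj _ _).mpr (Or.inl rfl), rfl⟩, ?_⟩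
      · have h1 := hgen u v
        have h2 := hc v
        have h3 := hle v
        rw [hww, hdeg] at h2
        rw [Finsupp.tsub_apply]
        omega
      · simp only [monomial_mul, mul_one]
        rw [tsub_add_cancel_of_le hle]

theorem monomial_mem_iff {K : Type} [Field K] {p : ℕ} {G : SimpleGraph (Fin (p + 3))}
    (hadj : ∀ i j, G.Adj i j ↔ (j = i + 1 ∨ i = j + 1)) (s : ℕ) (b : Fin (p + 3) →₀ ℕ) :
    (monomial b 1 : S K (p + 3)) ∈ compIdeal K (p + 3) G ^ s ↔
      Cov s (fun v => (s : ℤ) - b v) := by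
  classical
  rw [compIdeal_pow_eq hadj, mem_ideal_span_monomial_image]
  simp only [support_monomial, one_ne_zero, if_false, Finset.mem_singleton, forall_eq]
  constructor
  · rintro ⟨c, ⟨w, hw, hc⟩, hle⟩
    refine ⟨w, hw, fun v => ?_⟩
    have := hc v
    have := hle v
    beta_reduce
    omega
  · rintro ⟨w, hw, hb⟩
    refine ⟨Finsupp.equivFunOnFinite.symm fun v => s - deg w v, ⟨w, hw, fun v => ?_⟩, fun v => ?_⟩
    · have := deg_le_sum w v
      simp only [Finsupp.equivFunOnFinite_symm_apply_apply]
      omega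
    · have := hb v
      have := deg_le_sum w v
      simp only [Finsupp.equivFunOnFinite_symm_apply_apply] at *
      omega

theorem face_iff {K : Type} [Field K] {p : ℕ} {G : SimpleGraph (Fin (p + 3))}
    (hadj : ∀ i j, G.Adj i j ↔ (j = i + 1 ∨ i = j + 1)) (s : ℕ) (a : Fin (p + 3) →₀ ℕ)
    (F : Finset (Fin (p + 3))) : Face (compIdeal K (p + 3) G ^ s) a F ↔
      Cov s (fun v => (s : ℤ) + (if v ∈ F then 1 else 0) - a v) := by
  rw [Face, monomial_mem_iff hadj]
  constructor
  · rintro ⟨hle, h⟩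
    refine h.mono fun v => ?_
    have := hle v
    rw [Finsupp.tsub_apply]
    rw [expF_apply] at *
    split_ifs at * <;> omega
  · intro h
    have hle : expF F ≤ a := by
      obtain ⟨w, hw, hb⟩ := h
      intro v
      have h1 := hb v
      have h2 := deg_le_sum w v
      rw [expF_apply]
      simp only at h1
      split_ifs at * <;> omega
    refine ⟨hle, h.mono fun v => ?_⟩
    have := hle v
    rw [Finsupp.tsub_apply]
    rw [expF_apply] at *
    split_ifs at * <;> omega

/-- The demand vector `s + 1 - a` attached to a multidegree `a`. -/
def dem {p : ℕ} (s : ℕ) (a : Fin (p + 3) →₀ ℕ) : Fin (p + 3) → ℤ := fun v => (s : ℤ) + 1 - a v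

/-- Comparison of a homological shift ideal with `α^t · I^(s-t)`, multidegree by multidegree. -/
theorem HSIdeal_eq {K : Type} [Field K] {p : ℕ} {G : SimpleGraph (Fin (p + 3))}
    (hadj : ∀ i j, G.Adj i j ↔ (j = i + 1 ∨ i = j + 1)) {s t i : ℕ} (hts : t ≤ s)
    (h1 : ∀ a, Nontrivial (Hmod (compIdeal K (p + 3) G ^ s) a i) →
      Cov (s - t) (fun v => dem s a v - 1))
    (h2 : ∀ (a : Fin (p + 3) →₀ ℕ) (w : Fin (p + 3) → ℕ), ∑ v, w v = s - t →
      (∀ v, dem s a v = 1 + (deg w v : ℕ)) →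
      Nontrivial (Hmod (compIdeal K (p + 3) G ^ s) a i)) :
    HSIdeal i (compIdeal K (p + 3) G ^ s) =
      Ideal.span {(monomial (t • aexp (p + 3)) 1 : S K (p + 3))} *
        compIdeal K (p + 3) G ^ (s - t) := by
  apply le_antisymm
  · refine Ideal.span_le.mpr ?_
    rintro _ ⟨a, ha, rfl⟩
    have hcov := h1 a ha
    have hle : t • aexp (p + 3) ≤ a := by
      obtain ⟨w, hw, hb⟩ := hcov
      intro v
      have := hb v
      have := deg_le_sum w v
      simp only [dem] at *
      rw [Finsupp.smul_apply, aexp_apply, smul_eq_mul]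
      omega
    have e : (monomial a 1 : S K (p + 3)) =
        monomial (t • aexp (p + 3)) 1 * monomial (a - t • aexp (p + 3)) 1 := by
      rw [monomial_mul, mul_one, add_tsub_cancel_of_le hle]
    rw [SetLike.mem_coe, e]
    refine Ideal.mul_mem_mul (Ideal.mem_span_singleton_self _) ?_
    rw [monomial_mem_iff hadj]
    refine hcov.mono fun v => ?_
    have := hle v
    rw [Finsupp.smul_apply, aexp_apply, smul_eq_mul] at this
    rw [Finsupp.tsub_apply, Finsupp.smul_apply, aexp_apply, smul_eq_mul]
    simp only [dem]
    omega
  · rw [compIdeal_pow_eq hadj (s - t), Ideal.span_mul_span']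
    refine Ideal.span_le.mpr ?_
    rintro _ ⟨_, rfl, _, ⟨c, ⟨w, hw, hc⟩, rfl⟩, rfl⟩
    refine Ideal.subset_span ⟨t • aexp (p + 3) + c, h2 _ w hw fun v => ?_, ?_⟩
    · have := hc v
      simp only [dem]
      rw [Finsupp.add_apply, Finsupp.smul_apply, aexp_apply, smul_eq_mul]
      omega
    · simp [monomial_mul]

section Faces

variable {K : Type} [Field K] {p : ℕ} {G : SimpleGraph (Fin (p + 3))}

theorem face_univ_iff (hadj : ∀ i j, G.Adj i j ↔ (j = i + 1 ∨ i = j + 1)) (s : ℕ)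
    (a : Fin (p + 3) →₀ ℕ) :
    Face (compIdeal K (p + 3) G ^ s) a Finset.univ ↔ Cov s (dem s a) := by
  rw [face_iff hadj]
  simp only [Finset.mem_univ, if_true]
  rfl

theorem face_singleton_iff (hadj : ∀ i j, G.Adj i j ↔ (j = i + 1 ∨ i = j + 1)) (s : ℕ)
    (a : Fin (p + 3) →₀ ℕ) (u : Fin (p + 3)) :
    Face (compIdeal K (p + 3) G ^ s) a {u}ᶜ ↔ Cov s (dem s a - Pi.single u 1) := by
  rw [face_iff hadj]
  have : (fun v => (s : ℤ) + (if v ∈ ({u}ᶜ : Finset (Fin (p + 3))) then 1 else 0) - a v) =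
      dem s a - Pi.single u 1 := by
    funext v
    by_cases h : v = u <;> (simp [dem, h]; try ring)
  rw [this]

theorem face_pair_iff (hadj : ∀ i j, G.Adj i j ↔ (j = i + 1 ∨ i = j + 1)) (s : ℕ)
    (a : Fin (p + 3) →₀ ℕ) {u v : Fin (p + 3)} (huv : u ≠ v) :
    Face (compIdeal K (p + 3) G ^ s) a {u, v}ᶜ ↔
      Cov s (dem s a - Pi.single u 1 - Pi.single v 1) := by
  rw [face_iff hadj]
  have : (fun y => (s : ℤ) + (if y ∈ ({u, v}ᶜ : Finset (Fin (p + 3))) then 1 else 0) - a y) =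
      dem s a - Pi.single u 1 - Pi.single v 1 := by
    funext y
    by_cases h : y = u
    · subst h
      simp [dem, huv]
      ring
    · by_cases h' : y = v
      · subst h'
        simp [dem, h]
        ring
      · simp [dem, h, h']
  rw [this]

end Faces

/-- For the cycle `G` of length `n` and `I = I_c(G)`:
if `n = 2m+1` then `HS_{2m}(I^s) = α^m · I^{s-m}` for `s ≥ m`, and if
`n = 2m` then `HS_{2m-2}(I^s) = α^{m-1} · I^{s-m+1}` for `s ≥ m-1`; in
particular the corresponding top homological shift algebras are generated
in degrees `m` and `m-1` respectively. -/
theorem hs_top_compIdeal_pow_cycle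
    (K : Type) [Field K] (n : ℕ) (hn : 3 ≤ n) (G : SimpleGraph (Fin n))
    (hadj : ∀ i j : Fin n, G.Adj i j ↔
      ((j : ℕ) = ((i : ℕ) + 1) % n ∨ (i : ℕ) = ((j : ℕ) + 1) % n)) :
    (∀ m : ℕ, n = 2 * m + 1 → ∀ s : ℕ, m ≤ s →
      HSIdeal (2 * m) (compIdeal K n G ^ s) =
        Ideal.span {(monomial (m • aexp n) 1 : S K n)} *
          compIdeal K n G ^ (s - m)) ∧
    (∀ m : ℕ, n = 2 * m → ∀ s : ℕ, m - 1 ≤ s →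
      HSIdeal (2 * m - 2) (compIdeal K n G ^ s) =
        Ideal.span {(monomial ((m - 1) • aexp n) 1 : S K n)} *
          compIdeal K n G ^ (s - (m - 1))) := by
  obtain ⟨p, rfl⟩ : ∃ p, n = p + 3 := ⟨n - 3, by omega⟩
  have hadj' : ∀ i j, G.Adj i j ↔ (j = i + 1 ∨ i = j + 1) := by
    intro i j
    rw [hadj]
    simp only [Fin.ext_iff, Fin.val_add, Fin.val_one]
  refine ⟨fun m hm s hs => ?_, fun m hm s hs => ?_⟩
  · rw [show 2 * m = (p + 1) + 1 by omega]
    refine HSIdeal_eq hadj' hs (fun a ha => ?_) (fun a w hw hd => ?_)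
    · rw [nontrivial_Hmod_top rfl, face_univ_iff hadj'] at ha
      exact odd_core hm ha.1 fun j => (face_singleton_iff hadj' s a j).mp (ha.2 j)
    · obtain ⟨h1, h2⟩ := odd_conv hm hs w hw hd
      rw [nontrivial_Hmod_top rfl, face_univ_iff hadj']
      exact ⟨h1, fun j => (face_singleton_iff hadj' s a j).mpr (h2 j)⟩
  · rw [show 2 * m - 2 = p + 1 by omega]
    refine HSIdeal_eq hadj' hs (fun a ha => ?_) (fun a w hw hd => ?_)
    · rw [nontrivial_Hmod_subtop rfl] at ha
      obtain ⟨c, hc, j, k, hj, hk, hjk⟩ := ha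
      rw [face_singleton_iff hadj'] at hj hk
      exact even_core hm c
        (fun u v huv h => hc u v huv (mt (face_pair_iff hadj' s a huv).mp h)) hj hk hjk
    · obtain ⟨h1, h2⟩ := even_conv hm hs w hw hd
      rw [nontrivial_Hmod_subtop rfl]
      -- The indicator function of the odd vertices separates the two colour classes.
      refine ⟨fun v => ((v.val % 2 : ℕ) : K), fun u v huv h => ?_, 0, 1, ?_, ?_, ?_⟩
      · rw [face_pair_iff hadj' s a huv] at h
        by_contra hne
        exact h (h2 u v fun e => hne (congrArg (Nat.cast : ℕ → K) e))
      · rw [face_singleton_iff hadj']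
        exact h1 0
      · rw [face_singleton_iff hadj']
        exact h1 1
      · simp

end Paper
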